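/- arXiv:0801.4259 — 3 statements merged into one kernel-verified Lean document; each statement's English description precedes it below -/
import Mathlib

section
/- Let H be a complex Hilbert space, M a von Neumann algebra acting on H, and ξ₀ a cyclic and separating vector for M. Let N be another von Neumann algebra acting on H such that the closure of {b ξ₀ : b ∈ N, b ≥ 0} is contained in P♯. Then for every positive element a ∈ N there exists a unique positive element α(a) ∈ M satisfying a ξ₀ = α(a) ξ₀; moreover ‖α(a)‖ ≤ ‖a‖. -/
open scoped InnerProductSpace
open Filter

variable {H : Type*} [NormedAddCommGroup H] [InnerProductSpace ℂ H] [CompleteSpace H]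

/-- The positive cone `P♯`: the closure in `H` of `{a ξ₀ : a ∈ M, a positive}`. -/
def sharpCone (M : VonNeumannAlgebra H) (ξ₀ : H) : Set H :=
  closure {ζ : H | ∃ a : H →L[ℂ] H, a ∈ M ∧ a.IsPositive ∧ a ξ₀ = ζ}

/-- `ξ₀` is a cyclic vector for `M`: the linear span of `{x ξ₀ : x ∈ M}` is dense in `H`. -/
def IsCyclicVector (M : VonNeumannAlgebra H) (ξ₀ : H) : Prop :=
  Dense ((Submodule.span ℂ ((fun x : H →L[ℂ] H => x ξ₀) '' (M : Set (H →L[ℂ] H)))) : Set H)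

/-- `ξ₀` is a separating vector for `M`: `x ∈ M` and `x ξ₀ = 0` imply `x = 0`. -/
def IsSeparatingVector (M : VonNeumannAlgebra H) (ξ₀ : H) : Prop :=
  ∀ x : H →L[ℂ] H, x ∈ M → x ξ₀ = 0 → x = 0

/-!
If `ζ` lies in `P♯`, then `(x, y) ↦ ⟪x ξ₀, y ζ⟫` is a positive semidefinite form on the commutant
`M'`, because this closed condition on `ζ` holds for `ζ = b ξ₀` with `b ∈ M` positive. If `C ξ₀ - ζ`
lies in `P♯` as well, the form is dominated by `C ⟪x ξ₀, y ξ₀⟫`; since `M' ξ₀` is dense (`ξ₀` being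
separating for `M`), Cauchy–Schwarz shows that `x ξ₀ ↦ x ζ` extends to a positive operator of norm
at most `C`. It commutes with `M'`, so the double commutant theorem puts it in `M`. For positive
`a ∈ N` this applies to `ζ = a ξ₀` and `C = ‖a‖`, because `‖a‖ - a` is again positive and in `N`.
-/

section DenseRange

open scoped ComplexOrder
open RCLike

variable {𝕜 ι E F : Type*} [RCLike 𝕜] [NormedAddCommGroup F] [InnerProductSpace 𝕜 F]

theorem norm_le_of_denseRange_of_norm_inner_le {f : ι → F} (hf : DenseRange f) {v : F} {K : ℝ}
    (hK : 0 ≤ K) (hv : ∀ i, ‖⟪v, f i⟫_𝕜‖ ≤ K * ‖f i‖) : ‖v‖ ≤ K := by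
  rw [← innerSL_apply_norm 𝕜 v]
  exact (innerSL 𝕜 v).opNorm_le_bound hK fun w =>
    hf.induction_on w (isClosed_le (by fun_prop) (by fun_prop)) hv

theorem isPositive_of_denseRange {f : ι → F} (hf : DenseRange f) {b : F →L[𝕜] F}
    (hsymm : ∀ i j, ⟪b (f i), f j⟫_𝕜 = ⟪f i, b (f j)⟫_𝕜)
    (hnonneg : ∀ i, 0 ≤ re ⟪b (f i), f i⟫_𝕜) : b.IsPositive := by
  refine ⟨fun v w => ?_, fun v => ?_⟩
  · exact hf.induction_on₂ (p := fun v w => ⟪b v, w⟫_𝕜 = ⟪v, b w⟫_𝕜)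
      (isClosed_eq (by fun_prop) (by fun_prop)) hsymm v w
  · exact hf.induction_on (p := fun v => 0 ≤ re ⟪b v, v⟫_𝕜) v
      (isClosed_le (by fun_prop) (by fun_prop)) hnonneg

variable [AddCommGroup E] [Module 𝕜 E]

theorem norm_apply_sq_le_of_isPosSemidef {B : E →ₗ⋆[𝕜] E →ₗ[𝕜] 𝕜} (hB : B.IsPosSemidef) (x y : E) :
    ‖B x y‖ ^ 2 ≤ re (B x x) * re (B y y) := by
  let core : PreInnerProductSpace.Core 𝕜 E :=
    { inner := fun x y => B x y
      conj_inner_symm := fun x y => hB.isSymm.eq y x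
      re_inner_nonneg := fun x => (nonneg_iff.mp (hB.isNonneg.nonneg x)).1
      add_left := fun x y z => by simp
      smul_left := fun x y r => by simp }
  calc ‖B x y‖ ^ 2 = ‖B x y‖ * ‖B y x‖ := by rw [sq, ← hB.isSymm.eq x y, norm_conj]
    _ ≤ re (B x x) * re (B y y) := InnerProductSpace.Core.inner_mul_inner_self_le (c := core) x y

/-- The sesquilinear form `(x, y) ↦ ⟪S x, T y⟫`. When it is positive semidefinite, `S x ↦ T x` is
a densely defined positive operator as soon as `S` has dense range. -/
noncomputable def innerComp (S T : E →ₗ[𝕜] F) : E →ₗ⋆[𝕜] E →ₗ[𝕜] 𝕜 :=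
  (innerₛₗ 𝕜 ∘ₛₗ S).compl₂ T

variable {S T : E →ₗ[𝕜] F} {C : ℝ}

theorem inner_apply_comm_of_isPosSemidef_innerComp (hST : (innerComp S T).IsPosSemidef) (x y : E) :
    ⟪T x, S y⟫_𝕜 = ⟪S x, T y⟫_𝕜 := by
  rw [← inner_conj_symm]
  exact hST.isSymm.eq y x

theorem re_inner_apply_nonneg_of_isPosSemidef_innerComp (hST : (innerComp S T).IsPosSemidef)
    (x : E) : 0 ≤ re ⟪S x, T x⟫_𝕜 :=
  (nonneg_iff.mp (hST.isNonneg.nonneg x)).1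

theorem norm_le_mul_norm_of_isPosSemidef_innerComp (hS : DenseRange S)
    (hST : (innerComp S T).IsPosSemidef) (hC : 0 ≤ C)
    (hle : ∀ x, re ⟪S x, T x⟫_𝕜 ≤ C * ‖S x‖ ^ 2) (x : E) : ‖T x‖ ≤ C * ‖S x‖ := by
  refine norm_le_of_denseRange_of_norm_inner_le (𝕜 := 𝕜) hS (by positivity) fun y => ?_
  refine le_of_sq_le_sq ?_ (by positivity)
  calc ‖⟪T x, S y⟫_𝕜‖ ^ 2 = ‖⟪S y, T x⟫_𝕜‖ ^ 2 := by rw [norm_inner_symm]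
    _ ≤ re ⟪S y, T y⟫_𝕜 * re ⟪S x, T x⟫_𝕜 := norm_apply_sq_le_of_isPosSemidef hST y x
    _ ≤ (C * ‖S y‖ ^ 2) * (C * ‖S x‖ ^ 2) :=
      mul_le_mul (hle y) (hle x) (re_inner_apply_nonneg_of_isPosSemidef_innerComp hST x)
        (by positivity)
    _ = (C * ‖S x‖ * ‖S y‖) ^ 2 := by ring

theorem exists_isPositive_apply_eq_of_isPosSemidef_innerComp [CompleteSpace F] (hS : DenseRange S)
    (hST : (innerComp S T).IsPosSemidef) (hC : 0 ≤ C)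
    (hle : ∀ x, re ⟪S x, T x⟫_𝕜 ≤ C * ‖S x‖ ^ 2) :
    ∃ b : F →L[𝕜] F, b.IsPositive ∧ (∀ x, b (S x) = T x) ∧ ‖b‖ ≤ C := by
  have hnorm : ∀ x, ‖T x‖ ≤ C * ‖S x‖ := norm_le_mul_norm_of_isPosSemidef_innerComp hS hST hC hle
  have hb : ∀ x, T.extendOfNorm S (S x) = T x := LinearMap.extendOfNorm_eq hS ⟨C, hnorm⟩
  refine ⟨T.extendOfNorm S, isPositive_of_denseRange hS (fun x y => ?_) fun x => ?_, hb,
    LinearMap.opNorm_extendOfNorm_le hS hC hnorm⟩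
  · rw [hb, hb, inner_apply_comm_of_isPosSemidef_innerComp hST]
  · rw [hb, inner_apply_comm_of_isPosSemidef_innerComp hST]
    exact re_inner_apply_nonneg_of_isPosSemidef_innerComp hST x

end DenseRange

section Orbit

variable {M : VonNeumannAlgebra H} {ξ ζ : H}

/-- The linear map `x ↦ x ξ` from `M` to `H`, whose range is the orbit of `ξ`. Its domain is the
underlying star subalgebra because that is what carries the `ℂ`-module structure. -/
def orbitMap (M : VonNeumannAlgebra H) (ξ : H) : M.toStarSubalgebra →ₗ[ℂ] H where
  toFun x := (x : H →L[ℂ] H) ξ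
  map_add' _ _ := rfl
  map_smul' _ _ := rfl

theorem isCyclicVector_iff_denseRange_orbitMap :
    IsCyclicVector M ξ ↔ DenseRange (orbitMap M ξ) := by
  have himage : (fun x : H →L[ℂ] H => x ξ) '' (M : Set (H →L[ℂ] H)) =
      LinearMap.range (orbitMap M ξ) := by
    ext v
    exact ⟨fun ⟨x, hx, hv⟩ => ⟨⟨x, hx⟩, hv⟩, fun ⟨x, hv⟩ => ⟨x, x.2, hv⟩⟩
  rw [IsCyclicVector, himage, Submodule.span_eq, LinearMap.coe_range, DenseRange]

theorem IsSeparatingVector.eq_of_apply_eq (hsep : IsSeparatingVector M ξ) {x y : H →L[ℂ] H}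
    (hx : x ∈ M) (hy : y ∈ M) (hxy : x ξ = y ξ) : x = y :=
  sub_eq_zero.mp <| hsep _ (sub_mem hx hy) (by simp [hxy])

theorem IsSeparatingVector.isCyclicVector_commutant (hsep : IsSeparatingVector M ξ) :
    IsCyclicVector M.commutant ξ := by
  rw [isCyclicVector_iff_denseRange_orbitMap]
  let K : Submodule ℂ H := (LinearMap.range (orbitMap M.commutant ξ)).topologicalClosure
  have : CompleteSpace K := (Submodule.isClosed_topologicalClosure _).completeSpace_coe
  have hproj_mem : K.starProjection ∈ M := by
    rw [VonNeumannAlgebra.IsStarProjection.mem_iff isStarProjection_starProjection]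
    intro y hy
    rw [Submodule.range_starProjection, Module.End.mem_invtSubmodule]
    intro v hv
    refine map_mem_closure y.continuous hv ?_
    rintro _ ⟨x, rfl⟩
    exact ⟨⟨y * x, mul_mem hy x.2⟩, rfl⟩
  have hξ : ξ ∈ K := Submodule.le_topologicalClosure _ ⟨1, rfl⟩
  have hproj : K.starProjection = 1 :=
    hsep.eq_of_apply_eq hproj_mem (one_mem M) (Submodule.starProjection_eq_self_iff.mpr hξ)
  intro v
  exact Submodule.starProjection_eq_self_iff.mp (DFunLike.congr_fun hproj v)

theorem apply_apply_comm_of_mem_commutant {b x : H →L[ℂ] H} (hb : b ∈ M) (hx : x ∈ M.commutant)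
    (v : H) : b (x v) = x (b v) :=
  DFunLike.congr_fun (VonNeumannAlgebra.mem_commutant_iff.mp hx b hb) v

theorem IsCyclicVector.mem_commutant_of_apply_orbitMap (hξ : IsCyclicVector M ξ) {b : H →L[ℂ] H}
    (hb : ∀ x, b (orbitMap M ξ x) = orbitMap M ζ x) : b ∈ M.commutant := by
  rw [VonNeumannAlgebra.mem_commutant_iff]
  intro y hy
  ext v
  refine (isCyclicVector_iff_denseRange_orbitMap.mp hξ).induction_on v
    (isClosed_eq (by fun_prop) (by fun_prop)) fun x => ?_
  calc y (b (orbitMap M ξ x)) = orbitMap M ζ (⟨y, hy⟩ * x) := by rw [hb]; rfl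
    _ = b (y (orbitMap M ξ x)) := (hb (⟨y, hy⟩ * x)).symm

end Orbit

section SharpCone

open scoped ComplexOrder

variable {M : VonNeumannAlgebra H} {ξ ζ : H}

theorem isPosSemidef_innerComp_orbitMap_of_mem_sharpCone (hζ : ζ ∈ sharpCone M ξ) :
    (innerComp (orbitMap M.commutant ξ) (orbitMap M.commutant ζ)).IsPosSemidef where
  eq x y := by
    refine closure_minimal
      (t := {ζ | (starRingEnd ℂ) ⟪x.1 ξ, y.1 ζ⟫_ℂ = ⟪y.1 ξ, x.1 ζ⟫_ℂ}) ?_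
      (isClosed_eq (by fun_prop) (by fun_prop)) hζ
    rintro _ ⟨b, hbM, hb, rfl⟩
    rw [Set.mem_ofPred_eq, inner_conj_symm, ← apply_apply_comm_of_mem_commutant hbM x.2,
      ← apply_apply_comm_of_mem_commutant hbM y.2]
    exact hb.isSymmetric _ _
  nonneg x := by
    refine closure_minimal (t := {ζ | 0 ≤ ⟪x.1 ξ, x.1 ζ⟫_ℂ}) ?_
      (isClosed_le (by fun_prop) (by fun_prop)) hζ
    rintro _ ⟨b, hbM, hb, rfl⟩
    rw [Set.mem_ofPred_eq, ← apply_apply_comm_of_mem_commutant hbM x.2]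
    exact hb.inner_nonneg_right _

theorem re_inner_orbitMap_le_of_sub_mem_sharpCone {C : ℝ} (hζC : C • ξ - ζ ∈ sharpCone M ξ)
    (x : M.commutant.toStarSubalgebra) :
    (⟪orbitMap M.commutant ξ x, orbitMap M.commutant ζ x⟫_ℂ).re ≤
      C * ‖orbitMap M.commutant ξ x‖ ^ 2 := by
  have hnonneg : 0 ≤ (⟪x.1 ξ, x.1 (C • ξ - ζ)⟫_ℂ).re :=
    re_inner_apply_nonneg_of_isPosSemidef_innerComp
      (isPosSemidef_innerComp_orbitMap_of_mem_sharpCone hζC) x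
  have hself : (⟪x.1 ξ, x.1 ξ⟫_ℂ).re = ‖x.1 ξ‖ ^ 2 := inner_self_eq_norm_sq (𝕜 := ℂ) _
  rw [map_sub, map_real_smul x.1 x.1.continuous, inner_sub_right, inner_smul_right_eq_smul,
    Complex.sub_re, Complex.smul_re, hself, smul_eq_mul] at hnonneg
  exact sub_nonneg.mp hnonneg

theorem IsSeparatingVector.exists_isPositive_apply_eq_of_mem_sharpCone
    (hsep : IsSeparatingVector M ξ) {C : ℝ} (hC : 0 ≤ C) (hζ : ζ ∈ sharpCone M ξ)
    (hζC : C • ξ - ζ ∈ sharpCone M ξ) :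
    ∃ b ∈ M, b.IsPositive ∧ b ξ = ζ ∧ ‖b‖ ≤ C := by
  have hcyc : IsCyclicVector M.commutant ξ := hsep.isCyclicVector_commutant
  obtain ⟨b, hb, hbξ, hnorm⟩ := exists_isPositive_apply_eq_of_isPosSemidef_innerComp
    (isCyclicVector_iff_denseRange_orbitMap.mp hcyc)
    (isPosSemidef_innerComp_orbitMap_of_mem_sharpCone hζ) hC
    (re_inner_orbitMap_le_of_sub_mem_sharpCone hζC)
  have hbM : b ∈ M := by
    simpa only [M.commutant_commutant] using hcyc.mem_commutant_of_apply_orbitMap hbξ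
  exact ⟨b, hbM, hb, hbξ 1, hnorm⟩

end SharpCone

theorem stmt0_general (M : VonNeumannAlgebra H) (N : Submodule ℝ (H →L[ℂ] H)) (hN : 1 ∈ N)
    (ξ₀ : H) (hsep : IsSeparatingVector M ξ₀)
    (hsub : ∀ b ∈ N, b.IsPositive → b ξ₀ ∈ sharpCone M ξ₀)
    (a : H →L[ℂ] H) (haN : a ∈ N) (hapos : a.IsPositive) :
    ∃ b : H →L[ℂ] H, (b ∈ M ∧ b.IsPositive ∧ a ξ₀ = b ξ₀ ∧ ‖b‖ ≤ ‖a‖) ∧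
      ∀ b' : H →L[ℂ] H, b' ∈ M → b'.IsPositive → a ξ₀ = b' ξ₀ → b' = b := by
  have hcompl : (‖a‖ • (1 : H →L[ℂ] H) - a).IsPositive := by
    rw [← ContinuousLinearMap.le_def, ← Algebra.algebraMap_eq_smul_one]
    exact hapos.isSelfAdjoint.le_algebraMap_norm_self
  have hcomplN : ‖a‖ • (1 : H →L[ℂ] H) - a ∈ N := sub_mem (N.smul_mem _ hN) haN
  obtain ⟨b, hbM, hb, hbξ, hnorm⟩ := hsep.exists_isPositive_apply_eq_of_mem_sharpCone
    (norm_nonneg a) (hsub a haN hapos) (hsub _ hcomplN hcompl)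
  exact ⟨b, ⟨hbM, hb, hbξ.symm, hnorm⟩, fun b' hb'M _ hb' =>
    hsep.eq_of_apply_eq hb'M hbM (hb'.symm.trans hbξ.symm)⟩

/-- If the closure of `{b ξ₀ : b ∈ N, b ≥ 0}` is contained in `P♯`, then every
positive `a ∈ N` admits a unique positive `α(a) ∈ M` with `a ξ₀ = α(a) ξ₀`, and `‖α(a)‖ ≤ ‖a‖`. -/
theorem stmt0 (M N : VonNeumannAlgebra H) (ξ₀ : H)
    (hcyc : IsCyclicVector M ξ₀) (hsep : IsSeparatingVector M ξ₀)
    (hsub : closure {ζ : H | ∃ b : H →L[ℂ] H, b ∈ N ∧ b.IsPositive ∧ b ξ₀ = ζ} ⊆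
      sharpCone M ξ₀)
    (a : H →L[ℂ] H) (haN : a ∈ N) (hapos : a.IsPositive) :
    ∃ b : H →L[ℂ] H, (b ∈ M ∧ b.IsPositive ∧ a ξ₀ = b ξ₀ ∧ ‖b‖ ≤ ‖a‖) ∧
      ∀ b' : H →L[ℂ] H, b' ∈ M → b'.IsPositive → a ξ₀ = b' ξ₀ → b' = b :=
  stmt0_general M (N.toSubalgebra.toSubmodule.restrictScalars ℝ) (one_mem N) ξ₀ hsep
    (fun b hbN hb => hsub (subset_closure ⟨b, hbN, hb, rfl⟩)) a haN hapos
end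

section
/- Let H be a complex Hilbert space, M a von Neumann algebra acting on H, and ξ₀ a separating vector for M. If e is an orthogonal projection on H and b ∈ M satisfies 0 ≤ b ≤ 1 and b ξ₀ = e ξ₀, then b is a projection, i.e. b² = b. -/
/-!
The operator `c = b - b²` lies in `M` and is positive because `0 ≤ b ≤ 1`. Since `b ξ₀ = e ξ₀`,
both `⟪b ξ₀, ξ₀⟫` and `⟪b² ξ₀, ξ₀⟫ = ‖b ξ₀‖²` equal `‖e ξ₀‖²`, so `⟪c ξ₀, ξ₀⟫ = 0`. The
Cauchy–Schwarz inequality for the form `⟪c ·, ·⟫` then gives `c ξ₀ = 0`, and hence `c = 0`.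
-/

open scoped InnerProductSpace
open Filter

variable {H : Type*} [NormedAddCommGroup H] [InnerProductSpace ℂ H] [CompleteSpace H]

section RCLike

variable {𝕜 E : Type*} [RCLike 𝕜] [NormedAddCommGroup E] [InnerProductSpace 𝕜 E]

/-- The semi-inner product `(x, y) ↦ ⟪T x, y⟫` of a positive operator `T`, which makes the
Cauchy–Schwarz inequality available for the quadratic form of `T`. -/
abbrev preInnerCoreOfIsPositive {T : E →ₗ[𝕜] E} (hT : T.IsPositive) :
    PreInnerProductSpace.Core 𝕜 E where
  inner x y := ⟪T x, y⟫_𝕜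
  conj_inner_symm x y := by rw [inner_conj_symm, hT.isSymmetric]
  re_inner_nonneg := hT.re_inner_nonneg_left
  add_left x y z := by rw [map_add, inner_add_left]
  smul_left x y r := by rw [map_smul, inner_smul_left]

theorem apply_eq_zero_of_isPositive_of_inner_eq_zero {T : E →ₗ[𝕜] E} (hT : T.IsPositive) {x : E}
    (hx : ⟪T x, x⟫_𝕜 = 0) : T x = 0 := by
  have cauchy_schwarz : ‖⟪T x, T x⟫_𝕜‖ * ‖⟪T (T x), x⟫_𝕜‖ ≤
      RCLike.re ⟪T x, x⟫_𝕜 * RCLike.re ⟪T (T x), T x⟫_𝕜 :=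
    InnerProductSpace.Core.inner_mul_inner_self_le (c := preInnerCoreOfIsPositive hT) x (T x)
  rw [hT.isSymmetric (T x) x, hx, map_zero, zero_mul] at cauchy_schwarz
  have norm_inner_eq_zero : ‖⟪T x, T x⟫_𝕜‖ = 0 :=
    mul_self_eq_zero.1 (cauchy_schwarz.antisymm (mul_self_nonneg _))
  exact inner_self_eq_zero.1 (norm_eq_zero.1 norm_inner_eq_zero)

theorem isPositive_conj_of_isSymmetric {S T : E →ₗ[𝕜] E} (hT : T.IsPositive)
    (hS : S.IsSymmetric) : (S * T * S).IsPositive := by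
  refine ⟨fun x y ↦ ?_, fun x ↦ ?_⟩
  · simp only [Module.End.mul_apply, hS _ _, hT.isSymmetric _ _]
  · simpa only [Module.End.mul_apply, hS _ x] using hT.re_inner_nonneg_left (S x)

theorem isPositive_sub_mul_self {T : E →ₗ[𝕜] E} (hT : T.IsPositive)
    (hT' : (1 - T).IsPositive) : (T - T * T).IsPositive := by
  have decomposition : T - T * T = T * (1 - T) * T + (1 - T) * T * (1 - T) := by noncomm_ring
  rw [decomposition]
  exact (isPositive_conj_of_isSymmetric hT' hT.isSymmetric).add
    (isPositive_conj_of_isSymmetric hT hT'.isSymmetric)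

theorem apply_apply_eq_of_inner_apply_self_eq {T : E →ₗ[𝕜] E} (hT : T.IsPositive)
    (hT' : (1 - T).IsPositive) {x : E} (hx : ⟪T x, x⟫_𝕜 = ⟪T x, T x⟫_𝕜) : T (T x) = T x := by
  have inner_eq_zero : ⟪(T - T * T) x, x⟫_𝕜 = 0 := by
    rw [LinearMap.sub_apply, Module.End.mul_apply, inner_sub_left, hT.isSymmetric (T x) x, hx,
      sub_self]
  have sub_apply_eq_zero : (T - T * T) x = 0 :=
    apply_eq_zero_of_isPositive_of_inner_eq_zero (isPositive_sub_mul_self hT hT') inner_eq_zero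
  exact (sub_eq_zero.1 sub_apply_eq_zero).symm

theorem inner_apply_self_eq_of_isSymmetricProjection {P : E →ₗ[𝕜] E}
    (hP : P.IsSymmetricProjection) (x : E) : ⟪P x, x⟫_𝕜 = ⟪P x, P x⟫_𝕜 := by
  rw [← hP.isSymmetric (P x) x, ← Module.End.mul_apply, hP.isIdempotentElem.eq]

theorem stmt1_general {S : Type*} [SetLike S (E →L[𝕜] E)] [NonUnitalSubringClass S (E →L[𝕜] E)]
    (A : S) (ξ₀ : E) (hsep : ∀ x ∈ A, x ξ₀ = 0 → x = 0)
    (e : E →L[𝕜] E) (he : e.IsSymmetricProjection)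
    (b : E →L[𝕜] E) (hbA : b ∈ A) (hb_pos : b.IsPositive)
    (hb_le : (1 - b).IsPositive) (hbe : b ξ₀ = e ξ₀) :
    b * b = b := by
  have inner_eq : ⟪b ξ₀, ξ₀⟫_𝕜 = ⟪b ξ₀, b ξ₀⟫_𝕜 := by
    rw [hbe]
    exact inner_apply_self_eq_of_isSymmetricProjection he ξ₀
  have apply_apply_eq : b (b ξ₀) = b ξ₀ :=
    apply_apply_eq_of_inner_apply_self_eq hb_pos.toLinearMap hb_le.toLinearMap inner_eq
  exact sub_eq_zero.1 (hsep _ (sub_mem (mul_mem hbA hbA) hbA) (sub_eq_zero.2 apply_apply_eq))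

end RCLike

/-- If `ξ₀` separates `M`, `e` is an orthogonal projection on `H`, and `b ∈ M`
satisfies `0 ≤ b ≤ 1` and `b ξ₀ = e ξ₀`, then `b` is a projection. -/
theorem stmt1 (M : VonNeumannAlgebra H) (ξ₀ : H) (hsep : IsSeparatingVector M ξ₀)
    (e : H →L[ℂ] H) (he_sa : IsSelfAdjoint e) (he_idem : e * e = e)
    (b : H →L[ℂ] H) (hbM : b ∈ M) (hb_pos : b.IsPositive)
    (hb_le : (1 - b).IsPositive) (hbe : b ξ₀ = e ξ₀) :
    b * b = b :=
  stmt1_general M ξ₀ hsep e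
    (ContinuousLinearMap.isStarProjection_iff_isSymmetricProjection.1 ⟨he_idem, he_sa⟩)
    b hbM hb_pos hb_le hbe
end

section
/- Let H be a complex Hilbert space, M a von Neumann algebra acting on H, ξ₀ a cyclic and separating vector for M, and N another von Neumann algebra acting on H with the closure of {b ξ₀ : b ∈ N, b ≥ 0} contained in P♯. Let α : N → B(H) be a linear map such that α(x) ∈ M and α(x) ξ₀ = x ξ₀ for every x ∈ N. Then α is contractive on self-adjoint elements: for every self-adjoint x ∈ N, ‖α(x)‖ ≤ ‖x‖. -/
open scoped InnerProductSpace
open Filter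

variable {H : Type*} [NormedAddCommGroup H] [InnerProductSpace ℂ H] [CompleteSpace H]

/-!
Let `T ∈ M` agree at `ξ₀` with a self-adjoint `x ∈ N`, as `α x` does. If `a ∈ M` is positive and
`y` lies in the commutant of `M`, then `0 ≤ ⟪a (y ξ₀), y ξ₀⟫ = ⟪y (a ξ₀), y ξ₀⟫`, so
`0 ≤ ⟪y ζ, y ξ₀⟫` for all `ζ ∈ P♯` by continuity. A separating vector for `M` is cyclic for the
commutant, so an operator of `M` which maps `ξ₀` into `P♯` has a nonnegative quadratic form on a
dense set and is therefore positive. This applies to `‖x‖ - T` and `‖x‖ + T`, which agree at `ξ₀`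
with the positive operators `‖x‖ - x` and `‖x‖ + x` of `N`.
-/

open scoped ComplexOrder

theorem norm_le_of_neg_algebraMap_le_of_le_algebraMap {A : Type*} [CStarAlgebra A]
    [PartialOrder A] [StarOrderedRing A] {a : A} {r : ℝ} (hr : 0 ≤ r)
    (hlower : -algebraMap ℝ A r ≤ a) (hupper : a ≤ algebraMap ℝ A r) : ‖a‖ ≤ r := by
  have ha : IsSelfAdjoint a :=
    .of_ge hlower (IsSelfAdjoint.algebraMap A (.all r)).neg
  rw [← map_neg, algebraMap_le_iff_le_spectrum] at hlower
  rw [le_algebraMap_iff_spectrum_le] at hupper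
  rw [← cfc_id ℝ a]
  exact norm_cfc_le hr fun t ht => abs_le.2 ⟨hlower t ht, hupper t ht⟩

theorem isPositive_of_dense_of_inner_nonneg {E : Type*} [NormedAddCommGroup E]
    [InnerProductSpace ℂ E] {T : E →L[ℂ] E} {s : Set E} (hs : Dense s)
    (hT : ∀ v ∈ s, 0 ≤ ⟪T v, v⟫_ℂ) : T.IsPositive := by
  have hclosed : IsClosed {v : E | 0 ≤ ⟪T v, v⟫_ℂ} :=
    isClosed_le continuous_const (by fun_prop)
  have hnonneg (v : E) : 0 ≤ ⟪T v, v⟫_ℂ := closure_minimal hT hclosed (hs v)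
  rw [ContinuousLinearMap.isPositive_iff_complex]
  intro v
  obtain ⟨hre, him⟩ := Complex.nonneg_iff.1 (hnonneg v)
  exact ⟨Complex.ext rfl (by simpa using him), hre⟩

theorem apply_apply_of_mem_commutant {M : VonNeumannAlgebra H} {a y : H →L[ℂ] H}
    (hy : y ∈ M.commutant) (ha : a ∈ M) (ξ : H) : a (y ξ) = y (a ξ) :=
  DFunLike.congr_fun (VonNeumannAlgebra.mem_commutant_iff.1 hy a ha) ξ

theorem coe_span_image_apply (M : VonNeumannAlgebra H) (ξ : H) :
    (Submodule.span ℂ ((fun x : H →L[ℂ] H => x ξ) '' M) : Set H) =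
      (fun x : H →L[ℂ] H => x ξ) '' M :=
  congrArg _ (Submodule.span_eq (M.toStarSubalgebra.toSubalgebra.toSubmodule.map
    (ContinuousLinearMap.apply ℂ H ξ : (H →L[ℂ] H) →ₗ[ℂ] H)))

theorem isCyclicVector_iff_dense_image {M : VonNeumannAlgebra H} {ξ : H} :
    IsCyclicVector M ξ ↔ Dense ((fun x : H →L[ℂ] H => x ξ) '' M) := by
  rw [IsCyclicVector, coe_span_image_apply]

theorem span_image_apply_mem_invtSubmodule {M : VonNeumannAlgebra H} {x : H →L[ℂ] H}
    (hx : x ∈ M) (ξ : H) :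
    Submodule.span ℂ ((fun z : H →L[ℂ] H => z ξ) '' M) ∈ Module.End.invtSubmodule x := by
  rw [Module.End.mem_invtSubmodule, Submodule.span_le]
  rintro _ ⟨z, hz, rfl⟩
  exact Submodule.subset_span ⟨x * z, mul_mem hx hz, rfl⟩

theorem starProjection_topologicalClosure_mem {M : VonNeumannAlgebra H} {K : Submodule ℂ H}
    (hK : ∀ y ∈ M.commutant, K ∈ Module.End.invtSubmodule y) :
    K.topologicalClosure.starProjection ∈ M := by
  rw [VonNeumannAlgebra.IsStarProjection.mem_iff isStarProjection_starProjection,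
    Submodule.range_starProjection]
  exact fun y hy v hv => map_mem_closure y.continuous hv (hK y hy)

theorem inner_apply_nonneg_of_mem_sharpCone {M : VonNeumannAlgebra H} {ξ₀ ζ : H}
    (hζ : ζ ∈ sharpCone M ξ₀) {y : H →L[ℂ] H} (hy : y ∈ M.commutant) :
    0 ≤ ⟪y ζ, y ξ₀⟫_ℂ := by
  have hclosed : IsClosed {ζ : H | 0 ≤ ⟪y ζ, y ξ₀⟫_ℂ} :=
    isClosed_le continuous_const (by fun_prop)
  refine closure_minimal ?_ hclosed hζ
  rintro _ ⟨a, ha, hpos, rfl⟩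
  rw [Set.mem_ofPred_eq, ← apply_apply_of_mem_commutant hy ha]
  exact hpos.inner_nonneg_left (y ξ₀)

namespace IsSeparatingVector

variable {M : VonNeumannAlgebra H} {ξ₀ : H}

theorem isCyclicVector_commutant_s3 (hsep : IsSeparatingVector M ξ₀) :
    IsCyclicVector M.commutant ξ₀ := by
  let K := (Submodule.span ℂ
    ((fun y : H →L[ℂ] H => y ξ₀) '' M.commutant)).topologicalClosure
  have hKM : K.starProjection ∈ M :=
    starProjection_topologicalClosure_mem fun y hy => span_image_apply_mem_invtSubmodule hy ξ₀
  have hξ₀ : ξ₀ ∈ K :=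
    subset_closure (Submodule.subset_span ⟨1, one_mem M.commutant, rfl⟩)
  have hone_sub : 1 - K.starProjection = 0 :=
    hsep _ (sub_mem (one_mem M) hKM) (by simp [Submodule.starProjection_eq_self_iff.2 hξ₀])
  intro v
  have hv : K.starProjection v = v := by
    rw [← sub_eq_zero.1 hone_sub, one_apply_eq_self]
  exact Submodule.starProjection_eq_self_iff.1 hv

theorem isPositive_of_apply_mem_sharpCone (hsep : IsSeparatingVector M ξ₀) {T : H →L[ℂ] H}
    (hT : T ∈ M) (hTξ₀ : T ξ₀ ∈ sharpCone M ξ₀) : T.IsPositive := by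
  refine isPositive_of_dense_of_inner_nonneg
    (isCyclicVector_iff_dense_image.1 hsep.isCyclicVector_commutant_s3) ?_
  rintro _ ⟨y, hy, rfl⟩
  simpa only [apply_apply_of_mem_commutant hy hT] using
    inner_apply_nonneg_of_mem_sharpCone hTξ₀ hy

theorem le_of_apply_eq (hsep : IsSeparatingVector M ξ₀) {G : AddSubgroup (H →L[ℂ] H)}
    (hG : ∀ b ∈ G, b.IsPositive → b ξ₀ ∈ sharpCone M ξ₀) {x y S T : H →L[ℂ] H}
    (hx : x ∈ G) (hy : y ∈ G) (hxy : x ≤ y) (hS : S ∈ M) (hT : T ∈ M)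
    (hSx : S ξ₀ = x ξ₀) (hTy : T ξ₀ = y ξ₀) : S ≤ T := by
  refine hsep.isPositive_of_apply_mem_sharpCone (sub_mem hT hS) ?_
  have hagree : (T - S) ξ₀ = (y - x) ξ₀ := by
    simp only [sub_apply, hSx, hTy]
  exact hagree ▸ hG _ (sub_mem hy hx) hxy

end IsSeparatingVector

theorem algebraMap_real_mem (M : VonNeumannAlgebra H) (r : ℝ) :
    algebraMap ℝ (H →L[ℂ] H) r ∈ M :=
  M.toStarSubalgebra.algebraMap_mem (r : ℂ)

theorem stmt3_general (M : VonNeumannAlgebra H) (V : Submodule ℝ (H →L[ℂ] H)) (ξ₀ : H)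
    (hsep : IsSeparatingVector M ξ₀) (hone : 1 ∈ V)
    (hV : ∀ b ∈ V, b.IsPositive → b ξ₀ ∈ sharpCone M ξ₀)
    {x T : H →L[ℂ] H} (hx : x ∈ V) (hx_sa : IsSelfAdjoint x) (hT : T ∈ M)
    (hTx : T ξ₀ = x ξ₀) : ‖T‖ ≤ ‖x‖ := by
  let c := algebraMap ℝ (H →L[ℂ] H) ‖x‖
  have hcM : c ∈ M := algebraMap_real_mem M ‖x‖
  have hcV : c ∈ V := by
    simpa only [c, Algebra.algebraMap_eq_smul_one] using V.smul_mem ‖x‖ hone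
  have hlower : -c ≤ T :=
    hsep.le_of_apply_eq (G := V.toAddSubgroup) hV (neg_mem hcV) hx
      hx_sa.neg_algebraMap_norm_le_self (neg_mem hcM) hT rfl hTx
  have hupper : T ≤ c :=
    hsep.le_of_apply_eq (G := V.toAddSubgroup) hV hx hcV
      hx_sa.le_algebraMap_norm_self hT hcM hTx rfl
  exact norm_le_of_neg_algebraMap_le_of_le_algebraMap (norm_nonneg x) hlower hupper

/-- The map `α` is contractive on self-adjoint elements of `N`. -/
theorem stmt3 (M N : VonNeumannAlgebra H) (ξ₀ : H)
    (hcyc : IsCyclicVector M ξ₀) (hsep : IsSeparatingVector M ξ₀)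
    (hsub : closure {ζ : H | ∃ b : H →L[ℂ] H, b ∈ N ∧ b.IsPositive ∧ b ξ₀ = ζ} ⊆
      sharpCone M ξ₀)
    (α : (H →L[ℂ] H) → (H →L[ℂ] H))
    (hadd : ∀ x ∈ N, ∀ y ∈ N, α (x + y) = α x + α y)
    (hsmul : ∀ (c : ℂ), ∀ x ∈ N, α (c • x) = c • α x)
    (hmem : ∀ x ∈ N, α x ∈ M)
    (hfix : ∀ x ∈ N, (α x) ξ₀ = x ξ₀) :
    ∀ x ∈ N, IsSelfAdjoint x → ‖α x‖ ≤ ‖x‖ := by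
  intro x hx hx_sa
  exact stmt3_general M (N.toStarSubalgebra.toSubalgebra.toSubmodule.restrictScalars ℝ) ξ₀ hsep
    (one_mem N) (fun b hb hpos => hsub (subset_closure ⟨b, hb, hpos, rfl⟩))
    hx hx_sa (hmem x hx) (hfix x hx)
end
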